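/- arXiv:1301.2629 — 2 statements merged into one kernel-verified Lean document; each statement's English description precedes it below -/
import Mathlib

section
/- Assume g_sr·P_s ≥ g_rd·P_r. Then the optimal correlation coefficient ρ* lies in the unit interval: 0 ≤ ρ* ≤ 1. -/
/-!
Write `a = g_sd * P_s`, `b = g_sr * P_s` and `c = g_rd * P_r`. Then `ρ*` is the larger root of
`(a + b) * x ^ 2 + 2 * √(a * c) * x - (b - c)`, the quadratic obtained by equating
`(a + b) * (1 - x ^ 2)` with `a + c + 2 * √(a * c) * x`. It takes the value `-(b - c) ≤ 0` at
`x = 0` and `a + c + 2 * √(a * c) ≥ 0` at `x = 1`, so its larger root lies in `[0, 1]`.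
-/

section QuadraticLargerRoot

variable {p q r : ℝ}

theorem quadratic_larger_root_nonneg (hp : 0 < p) (hr : 0 ≤ r) :
    0 ≤ (-q + √(q ^ 2 + p * r)) / p := by
  have le_sqrt_discrim : q ≤ √(q ^ 2 + p * r) :=
    Real.le_sqrt_of_sq_le (le_add_of_nonneg_right (mul_nonneg hp.le hr))
  exact div_nonneg (by linarith) hp.le

theorem quadratic_larger_root_le_one (hp : 0 < p) (hpq : 0 ≤ p + q) (hr : r ≤ p + 2 * q) :
    (-q + √(q ^ 2 + p * r)) / p ≤ 1 := by
  have sqrt_discrim_le : √(q ^ 2 + p * r) ≤ p + q := by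
    refine Real.sqrt_le_iff.2 ⟨hpq, ?_⟩
    calc q ^ 2 + p * r ≤ q ^ 2 + p * (p + 2 * q) := by gcongr
      _ = (p + q) ^ 2 := by ring
  rw [div_le_one hp]
  linarith

end QuadraticLargerRoot

theorem mul_add_sub_eq_sqrt_sq_add_mul_sub {a b c : ℝ} (hac : 0 ≤ a * c) :
    b * (a + b - c) = √(a * c) ^ 2 + (a + b) * (b - c) := by
  rw [Real.sq_sqrt hac]
  ring

/-- If g_sr·P_s ≥ g_rd·P_r, then the optimal correlation coefficient ρ* lies in the
unit interval: 0 ≤ ρ* ≤ 1. -/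
theorem rhoStar_mem_unit_interval
    (g_sd g_sr g_rd P_s P_r : ℝ)
    (hg_sd : 0 < g_sd) (hg_sr : 0 < g_sr) (hg_rd : 0 < g_rd)
    (hP_s : 0 < P_s) (hP_r : 0 < P_r)
    (h : g_sr * P_s ≥ g_rd * P_r)
    (ρstar : ℝ)
    (hρstar : ρstar =
      (-Real.sqrt (g_sd * P_s * (g_rd * P_r)) +
        Real.sqrt (g_sr * P_s * ((g_sd + g_sr) * P_s - g_rd * P_r))) /
        ((g_sd + g_sr) * P_s)) :
    0 ≤ ρstar ∧ ρstar ≤ 1 := by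
  have a_pos : 0 < g_sd * P_s := mul_pos hg_sd hP_s
  have b_pos : 0 < g_sr * P_s := mul_pos hg_sr hP_s
  have c_pos : 0 < g_rd * P_r := mul_pos hg_rd hP_r
  have sqrt_ac_nonneg := Real.sqrt_nonneg (g_sd * P_s * (g_rd * P_r))
  rw [hρstar, add_mul, mul_add_sub_eq_sqrt_sq_add_mul_sub (mul_pos a_pos c_pos).le]
  exact ⟨quadratic_larger_root_nonneg (add_pos a_pos b_pos) (sub_nonneg.2 h),
    quadratic_larger_root_le_one (add_pos a_pos b_pos) (by linarith) (by linarith)⟩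
end

section
/- Closed form of the AWGN cutset upper bound when the relay-to-destination link dominates: if g_sr·P_s ≤ g_rd·P_r, then the supremum over ρ ∈ [−1,1] of min(C(B(ρ)), C(M(ρ))) equals C((g_sd + g_sr)·P_s/N), and it is attained at ρ = 0. -/
/-!
Correlating the source and relay signals only weakens the broadcast cut, so `C (B ρ)` is largest at
`ρ = 0`. When `g_sr * P_s ≤ g_rd * P_r`, the multiple-access cut is at least as strong as the
broadcast cut at `ρ = 0`, so the minimum of the two cuts attains this largest value.
-/

open Set

theorem isGreatest_image_min_of_isMaxOn {α β : Type*} [LinearOrder β] {f g : α → β} {s : Set α}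
    {a : α} (ha : a ∈ s) (hf : IsMaxOn f s a) (hfg : f a ≤ g a) :
    IsGreatest ((fun x => min (f x) (g x)) '' s) (f a) := by
  refine ⟨⟨a, ha, min_eq_left hfg⟩, ?_⟩
  rintro _ ⟨x, hx, rfl⟩
  exact (min_le_left _ _).trans (hf hx)

/-- The capacity, in bits per channel use, of a real additive white Gaussian noise channel with
signal-to-noise ratio `x`. The value is meaningful only for `x > -1`, since `Real.logb` takes
junk values at nonpositive arguments. -/
noncomputable def gaussianCapacity (x : ℝ) : ℝ :=
  (1 / 2) * Real.logb 2 (1 + x)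

theorem gaussianCapacity_strictMonoOn : StrictMonoOn gaussianCapacity (Ioi (-1)) := by
  intro x hx y _ hxy
  have hx_pos : 0 < 1 + x := neg_lt_iff_pos_add'.mp hx
  have hlog : Real.logb 2 (1 + x) < Real.logb 2 (1 + y) :=
    Real.logb_lt_logb one_lt_two hx_pos (by gcongr)
  unfold gaussianCapacity
  gcongr

theorem gaussianCapacity_le_gaussianCapacity {x y : ℝ} (hx : -1 < x) (hxy : x ≤ y) :
    gaussianCapacity x ≤ gaussianCapacity y :=
  gaussianCapacity_strictMonoOn.monotoneOn hx (hx.trans_le hxy) hxy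

/-- The signal-to-noise ratio of the broadcast cut of the relay channel, which separates the source
from the relay and the destination, at correlation `ρ` between the source and relay signals. -/
noncomputable def broadcastSNR (g_sd g_sr P_s N ρ : ℝ) : ℝ :=
  (g_sd + g_sr) * P_s * (1 - ρ ^ 2) / N

/-- The signal-to-noise ratio of the multiple-access cut of the relay channel, which separates the
source and the relay from the destination, at correlation `ρ` between the source and relay
signals. -/
noncomputable def multipleAccessSNR (g_sd g_rd P_s P_r N ρ : ℝ) : ℝ :=
  (g_sd * P_s + g_rd * P_r + 2 * ρ * Real.sqrt (g_sd * P_s * (g_rd * P_r))) / N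

section RelayChannel

variable {g_sd g_sr g_rd P_s P_r N ρ : ℝ}

theorem broadcastSNR_eq_mul :
    broadcastSNR g_sd g_sr P_s N ρ = (g_sd + g_sr) * P_s / N * (1 - ρ ^ 2) :=
  mul_div_right_comm _ _ _

theorem broadcastSNR_zero : broadcastSNR g_sd g_sr P_s N 0 = (g_sd + g_sr) * P_s / N := by
  simp [broadcastSNR]

theorem multipleAccessSNR_zero :
    multipleAccessSNR g_sd g_rd P_s P_r N 0 = (g_sd * P_s + g_rd * P_r) / N := by
  simp [multipleAccessSNR]

theorem broadcastSNR_nonneg (hSNR : 0 ≤ (g_sd + g_sr) * P_s / N) (hρ : ρ ∈ Icc (-1) 1) :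
    0 ≤ broadcastSNR g_sd g_sr P_s N ρ := by
  have hρ_sq : ρ ^ 2 ≤ 1 := (sq_le_one_iff_abs_le_one ρ).mpr (abs_le.mpr hρ)
  rw [broadcastSNR_eq_mul]
  exact mul_nonneg hSNR (sub_nonneg.mpr hρ_sq)

theorem broadcastSNR_le_broadcastSNR_zero (hSNR : 0 ≤ (g_sd + g_sr) * P_s / N) :
    broadcastSNR g_sd g_sr P_s N ρ ≤ broadcastSNR g_sd g_sr P_s N 0 := by
  rw [broadcastSNR_zero, broadcastSNR_eq_mul]
  exact mul_le_of_le_one_right hSNR (sub_le_self 1 (sq_nonneg ρ))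

theorem broadcastSNR_zero_le_multipleAccessSNR_zero (hN : 0 ≤ N) (h : g_sr * P_s ≤ g_rd * P_r) :
    broadcastSNR g_sd g_sr P_s N 0 ≤ multipleAccessSNR g_sd g_rd P_s P_r N 0 := by
  rw [broadcastSNR_zero, multipleAccessSNR_zero, add_mul]
  gcongr

theorem isMaxOn_gaussianCapacity_broadcastSNR (hSNR : 0 ≤ (g_sd + g_sr) * P_s / N) :
    IsMaxOn (fun ρ => gaussianCapacity (broadcastSNR g_sd g_sr P_s N ρ)) (Icc (-1) 1) 0 :=
  fun _ hρ => gaussianCapacity_le_gaussianCapacity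
    (neg_one_lt_zero.trans_le (broadcastSNR_nonneg hSNR hρ))
    (broadcastSNR_le_broadcastSNR_zero hSNR)

end RelayChannel

/-- Closed form of the AWGN cutset upper bound when the relay-to-destination link
dominates: if g_sr·P_s ≤ g_rd·P_r, then the supremum over ρ ∈ [−1,1] of
min(C(B(ρ)), C(M(ρ))) equals C((g_sd + g_sr)·P_s/N), attained at ρ = 0. -/
theorem cutset_closed_form_relay_dest_dominates
    (g_sd g_sr g_rd P_s P_r N : ℝ)
    (hg_sd : 0 < g_sd) (hg_sr : 0 < g_sr) (hg_rd : 0 < g_rd)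
    (hP_s : 0 < P_s) (hP_r : 0 < P_r) (hN : 0 < N)
    (C B M : ℝ → ℝ)
    (hC : ∀ x, C x = (1 / 2) * Real.logb 2 (1 + x))
    (hB : ∀ ρ, B ρ = (g_sd + g_sr) * P_s * (1 - ρ ^ 2) / N)
    (hM : ∀ ρ, M ρ =
      (g_sd * P_s + g_rd * P_r + 2 * ρ * Real.sqrt (g_sd * P_s * (g_rd * P_r))) / N)
    (h : g_sr * P_s ≤ g_rd * P_r) :
    IsGreatest ((fun ρ => min (C (B ρ)) (C (M ρ))) '' Set.Icc (-1 : ℝ) 1)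
        (C ((g_sd + g_sr) * P_s / N)) ∧
      min (C (B 0)) (C (M 0)) = C ((g_sd + g_sr) * P_s / N) := by
  obtain rfl : C = gaussianCapacity := funext hC
  obtain rfl : B = broadcastSNR g_sd g_sr P_s N := funext hB
  obtain rfl : M = multipleAccessSNR g_sd g_rd P_s P_r N := funext hM
  have hSNR : 0 ≤ (g_sd + g_sr) * P_s / N := by positivity
  have hcuts : gaussianCapacity (broadcastSNR g_sd g_sr P_s N 0) ≤
      gaussianCapacity (multipleAccessSNR g_sd g_rd P_s P_r N 0) :=
    gaussianCapacity_le_gaussianCapacity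
      (neg_one_lt_zero.trans_le (broadcastSNR_nonneg hSNR (by simp)))
      (broadcastSNR_zero_le_multipleAccessSNR_zero hN.le h)
  rw [← broadcastSNR_zero]
  exact ⟨isGreatest_image_min_of_isMaxOn (by simp) (isMaxOn_gaussianCapacity_broadcastSNR hSNR)
    hcuts, min_eq_left hcuts⟩
end
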